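/- Let Z = max_{1≤k≤K} Y_k where, conditioned on r_0 (chi-squared with 2N degrees of freedom), the Y_k are i.i.d. noncentral chi-squared with 2N degrees of freedom and noncentrality (μ²/(1-μ²))r_0. Then Z has density f_Z(z) = K ∫_0^∞ [r^{N-1} exp(-r/2)/(2^{N+1} Γ(N))] [1 - Q_N(√((μ²/(1-μ²))r), √z)]^{K-1} [Q_N(√((μ²/(1-μ²))r), √z) - Q_{N-1}(√((μ²/(1-μ²))r), √z)] dr for z > 0. -/

import Mathlib

open MeasureTheory ProbabilityTheory Real Set Filter
/-- Modified Bessel function of the first kind of (integer) order `n`. -/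
noncomputable def besselI (n : ℕ) (x : ℝ) : ℝ :=
  ∑' m : ℕ, (x / 2) ^ (2 * m + n) / ((Nat.factorial m : ℝ) * (Nat.factorial (m + n)))

/-- `N`-th order Marcum Q-function, `Q_N(a,b) = ∫_b^∞ x (x/a)^{N-1} e^{-(x²+a²)/2} I_{N-1}(ax) dx`,
with its continuous extension (the regularized upper incomplete gamma tail) at `a = 0`. -/
noncomputable def marcumQ (N : ℕ) (a b : ℝ) : ℝ :=
  if a = 0 then
    ∫ x in Ioi b, x ^ (2 * N - 1) * Real.exp (-(x ^ 2) / 2) /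
      (2 ^ (N - 1) * (Nat.factorial (N - 1) : ℝ))
  else
    ∫ x in Ioi b, x * (x / a) ^ (N - 1) * Real.exp (-(x ^ 2 + a ^ 2) / 2)
      * besselI (N - 1) (a * x)

/-- Density of the noncentral chi-squared distribution with `2N` degrees of freedom and
noncentrality `lam` (for `lam = 0` it is the central chi-squared density with `2N` dof). -/
noncomputable def ncChiSqPdf (N : ℕ) (lam h : ℝ) : ℝ :=
  if lam = 0 then h ^ (N - 1) * Real.exp (-h / 2) / (2 ^ N * Real.Gamma N)
  else (1 / 2) * (h / lam) ^ (((N : ℝ) - 1) / 2) * Real.exp (-(h + lam) / 2)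
      * besselI (N - 1) (Real.sqrt (lam * h))

/-- Noncentral chi-squared distribution with `2N` degrees of freedom and noncentrality `lam`. -/
noncomputable def ncChiSq (N : ℕ) (lam : ℝ) : Measure ℝ :=
  volume.withDensity fun h => ENNReal.ofReal (if 0 < h then ncChiSqPdf N lam h else 0)
noncomputable def serS (n : ℕ) (x : ℝ) : ℝ :=
  ∑' m : ℕ, x ^ m / ((Nat.factorial m : ℝ) * (Nat.factorial (m + n)))

lemma serS_bound (n m : ℕ) {x R : ℝ} (h : |x| ≤ R) :
    ‖x ^ m / ((Nat.factorial m : ℝ) * (Nat.factorial (m + n)))‖ ≤ R ^ m / (Nat.factorial m : ℝ) := by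
  rw [norm_div, norm_pow, Real.norm_eq_abs, Real.norm_of_nonneg (by positivity)]
  have h1 : (1:ℝ) ≤ (Nat.factorial (m + n)) := by exact_mod_cast Nat.factorial_pos _
  have h2 : (0:ℝ) < (Nat.factorial m) := by exact_mod_cast Nat.factorial_pos _
  have hR : 0 ≤ R := (abs_nonneg x).trans h
  gcongr
  nlinarith

lemma serS_summable (n : ℕ) (x : ℝ) :
    Summable fun m : ℕ => x ^ m / ((Nat.factorial m : ℝ) * (Nat.factorial (m + n))) :=
  Summable.of_norm_bounded (Real.summable_pow_div_factorial |x|)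
    (fun m => serS_bound n m le_rfl)

lemma serS_continuous (n : ℕ) : Continuous (serS n) := by
  rw [continuous_iff_continuousAt]
  intro x
  have : ContinuousOn (serS n) (Metric.closedBall 0 (|x| + 1)) := by
    apply continuousOn_tsum (u := fun m => (|x| + 1) ^ m / (Nat.factorial m : ℝ))
    · intro m; fun_prop
    · exact Real.summable_pow_div_factorial _
    · intro m y hy
      exact serS_bound n m (by simpa using hy)
  apply this.continuousAt
  apply Metric.closedBall_mem_nhds_of_mem
  simp

lemma serT_hasDerivAt (n : ℕ) (x : ℝ) :
    HasDerivAt (fun y => y ^ (n + 1) * serS (n + 1) y) (x ^ n * serS n x) x := by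
  have key : HasDerivAt (fun y => ∑' m : ℕ, y ^ (m + (n + 1)) / ((Nat.factorial m : ℝ) * (Nat.factorial (m + (n + 1)))))
      (∑' m : ℕ, x ^ (m + n) / ((Nat.factorial m : ℝ) * (Nat.factorial (m + n)))) x := by
    apply hasDerivAt_tsum_of_isPreconnected
      (u := fun m => (|x| + 1) ^ n * ((|x| + 1) ^ m / (Nat.factorial m : ℝ)))
      (t := Metric.ball 0 (|x| + 1)) (y₀ := 0)
      (g' := fun m y => y ^ (m + n) / ((Nat.factorial m : ℝ) * (Nat.factorial (m + n))))
    · exact (Real.summable_pow_div_factorial _).mul_left _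
    · exact Metric.isOpen_ball
    · exact (convex_ball _ _).isPreconnected
    · intro m y hy
      have := ((hasDerivAt_pow (m + (n + 1)) y).div_const ((Nat.factorial m : ℝ) * (Nat.factorial (m + (n + 1)))))
      refine this.congr_deriv ?_
      have e : m + (n + 1) = (m + n) + 1 := by ring
      rw [e, Nat.factorial_succ]
      have h1 : (Nat.factorial (m + n) : ℝ) ≠ 0 := by positivity
      have h2 : (Nat.factorial m : ℝ) ≠ 0 := by positivity
      push_cast
      have h3 : (m + n + 1 : ℝ) ≠ 0 := by positivity
      field_simp
    · intro m y hy
      have hy' : |y| ≤ |x| + 1 := by simpa using (Metric.mem_ball.1 hy).le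
      have := serS_bound n m hy'
      have e : y ^ (m + n) / ((Nat.factorial m : ℝ) * (Nat.factorial (m + n)))
        = y ^ n * (y ^ m / ((Nat.factorial m : ℝ) * (Nat.factorial (m + n)))) := by ring
      rw [e, norm_mul, norm_pow, Real.norm_eq_abs]
      gcongr
    · simp; positivity
    · refine summable_zero.congr fun m => ?_
      simp
    · simp
  convert key using 1
  · ext y
    rw [serS, ← tsum_mul_left]
    congr 1; ext m; ring
  · rw [serS, ← tsum_mul_left]
    congr 1; ext m; ring

noncomputable def pd (n : ℕ) (l h : ℝ) : ℝ :=
  Real.exp (-(l + h) / 2) * (1 / 2) * (h / 2) ^ n * serS n (l * h / 4)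

lemma serS_nonneg (n : ℕ) {x : ℝ} (hx : 0 ≤ x) : 0 ≤ serS n x :=
  tsum_nonneg fun m => by positivity

lemma pd_nonneg (n : ℕ) {l h : ℝ} (hl : 0 ≤ l) (hh : 0 ≤ h) : 0 ≤ pd n l h := by
  have := serS_nonneg n (x := l * h / 4) (by positivity)
  unfold pd; positivity

lemma pd_continuous (n : ℕ) : Continuous (Function.uncurry (pd n)) := by
  have := serS_continuous n
  unfold pd Function.uncurry
  fun_prop

lemma pd_continuous' (n : ℕ) (l : ℝ) : Continuous (pd n l) := by
  have := serS_continuous n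
  unfold pd
  fun_prop

lemma exp_tsum (x : ℝ) : HasSum (fun m : ℕ => x ^ m / (Nat.factorial m : ℝ)) (Real.exp x) := by
  rw [Real.exp_eq_exp_ℝ]
  exact NormedSpace.expSeries_div_hasSum_exp x

lemma pd_le (n : ℕ) {l h : ℝ} (hl : 0 ≤ l) (hh : 0 ≤ h) : pd n l h ≤ 1 / 2 := by
  have key : (h / 2) ^ n * serS n (l * h / 4) ≤ Real.exp (l / 2) * Real.exp (h / 2) := by
    rw [serS, ← tsum_mul_left, ← ((exp_tsum (l / 2)).mul_right _).tsum_eq]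
    apply Summable.tsum_le_tsum _ ((serS_summable n _).mul_left _) ((exp_tsum (l / 2)).mul_right _).summable
    intro m
    have := Real.pow_div_factorial_le_exp (h / 2) (by positivity) (m + n)
    calc _ = (l / 2) ^ m / (Nat.factorial m : ℝ) * ((h / 2) ^ (m + n) / (Nat.factorial (m + n))) := by
          have : l * h / 4 = (l / 2) * (h / 2) := by ring
          rw [this, mul_pow, pow_add]; field_simp
      _ ≤ _ := by gcongr
  have e : Real.exp (-(l + h) / 2) * (Real.exp (l / 2) * Real.exp (h / 2)) = 1 := by
    rw [← Real.exp_add, ← Real.exp_add, ← Real.exp_zero]; congr 1; ring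
  calc pd n l h = Real.exp (-(l + h) / 2) * ((h / 2) ^ n * serS n (l * h / 4)) * (1 / 2) := by
        unfold pd; ring
    _ ≤ Real.exp (-(l + h) / 2) * (Real.exp (l / 2) * Real.exp (h / 2)) * (1 / 2) := by gcongr
    _ = 1 / 2 := by rw [e]; ring

lemma pd_lintegral (n : ℕ) {l : ℝ} (hl : 0 ≤ l) :
    ∫⁻ h in Ioi 0, ENNReal.ofReal (pd n l h) = 1 := by
  have e1 : ∀ h ∈ Ioi (0:ℝ), ENNReal.ofReal (pd n l h) =
      ∑' m : ℕ, ENNReal.ofReal (Real.exp (-l / 2) * ((l / 2) ^ m / (Nat.factorial m : ℝ))) *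
        gammaPDF ((n + m + 1 : ℕ) : ℝ) (1 / 2) h := by
    intro h hh
    have hh' : (0:ℝ) < h := hh
    unfold pd serS
    rw [← tsum_mul_left, ENNReal.ofReal_tsum_of_nonneg]
    · congr 1; ext m
      rw [gammaPDF, gammaPDFReal, if_pos hh'.le, ← ENNReal.ofReal_mul (by positivity)]
      congr 1
      have : ((n + m + 1 : ℕ) : ℝ) - 1 = ((n + m : ℕ) : ℝ) := by push_cast; ring
      rw [this, Real.rpow_natCast, Real.rpow_natCast]
      push_cast [Real.Gamma_nat_eq_factorial]
      have h3 : Real.Gamma ((n:ℝ) + m + 1) = (Nat.factorial (m + n)) := by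
        rw [add_comm m n, ← Real.Gamma_nat_eq_factorial]; push_cast; rfl
      have h4 : Real.exp (-(l + h) / 2) = Real.exp (-l / 2) * Real.exp (-(1 / 2 * h)) := by
        rw [← Real.exp_add]; congr 1; ring
      rw [h3, h4]
      have : l * h / 4 = (l / 2) * (h / 2) := by ring
      rw [this, mul_pow, pow_succ, pow_add, pow_add, div_pow h, div_pow h, one_div, inv_pow, inv_pow]
      field_simp
    · intro m; positivity
    · exact (serS_summable n _).mul_left _
  rw [setLIntegral_congr_fun measurableSet_Ioi e1, lintegral_tsum]
  · have : ∀ m : ℕ, ∫⁻ h in Ioi 0, ENNReal.ofReal (Real.exp (-l / 2) * ((l / 2) ^ m / (Nat.factorial m : ℝ))) *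
        gammaPDF ((n + m + 1 : ℕ) : ℝ) (1 / 2) h = ENNReal.ofReal (Real.exp (-l / 2) * ((l / 2) ^ m / (Nat.factorial m : ℝ))) := by
      intro m
      rw [lintegral_const_mul _ (by unfold gammaPDF; exact (measurable_gammaPDFReal _ _).ennreal_ofReal)]
      have := lintegral_gammaPDF_eq_one (a := ((n + m + 1 : ℕ) : ℝ)) (r := 1 / 2) (by positivity) (by positivity)
      rw [← lintegral_add_compl _ (measurableSet_Ioi (a := (0:ℝ))), compl_Ioi, setLIntegral_congr Iio_ae_eq_Iic.symm,
        lintegral_gammaPDF_of_nonpos le_rfl, add_zero] at this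
      rw [this, mul_one]
    simp_rw [this]
    rw [← ENNReal.ofReal_tsum_of_nonneg]
    · rw [((exp_tsum (l / 2)).mul_left _).tsum_eq, ← Real.exp_add]
      simp [neg_div]
    · intro m; positivity
    · exact ((exp_tsum (l / 2)).mul_left _).summable
  · intro m
    unfold gammaPDF
    exact ((measurable_gammaPDFReal _ _).ennreal_ofReal.const_mul _).aemeasurable

lemma pd_integrableOn (n : ℕ) {l : ℝ} (hl : 0 ≤ l) : IntegrableOn (pd n l) (Ioi 0) := by
  refine ⟨(pd_continuous' n l).aestronglyMeasurable, ?_⟩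
  rw [hasFiniteIntegral_iff_ofReal, pd_lintegral n hl]
  · simp
  · filter_upwards [ae_restrict_mem measurableSet_Ioi] with h hh
    exact pd_nonneg n hl (le_of_lt hh)

lemma pd_integral (n : ℕ) {l : ℝ} (hl : 0 ≤ l) : ∫ h in Ioi 0, pd n l h = 1 := by
  rw [integral_eq_lintegral_of_nonneg_ae, pd_lintegral n hl]
  · simp
  · filter_upwards [ae_restrict_mem measurableSet_Ioi] with h hh
    exact pd_nonneg n hl (le_of_lt hh)
  · exact (pd_continuous' n l).aestronglyMeasurable

lemma pd_hasDerivAt (n : ℕ) {l : ℝ} (hl : 0 < l) (h : ℝ) :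
    HasDerivAt (pd (n + 1) l) (1 / 2 * (pd n l h - pd (n + 1) l h)) h := by
  have hlin : HasDerivAt (fun y : ℝ => l * y / 4) (l / 4) h := by
    simpa using ((hasDerivAt_id h).const_mul l).div_const 4
  have h1 : HasDerivAt (fun y => (l * y / 4) ^ (n + 1) * serS (n + 1) (l * y / 4))
      ((l * h / 4) ^ n * serS n (l * h / 4) * (l / 4)) h :=
    HasDerivAt.comp (h₂ := fun y => y ^ (n + 1) * serS (n + 1) y) h (serT_hasDerivAt n (l * h / 4)) hlin
  have h2 : HasDerivAt (fun y : ℝ => Real.exp (-(l + y) / 2)) (Real.exp (-(l + h) / 2) * (-1 / 2)) h := by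
    apply HasDerivAt.exp
    simpa using (((hasDerivAt_id h).const_add l).neg).div_const 2
  have h3 := ((h2.mul h1).const_mul (1 / 2 * (2 / l) ^ (n + 1)))
  have e : pd (n + 1) l = fun y => (1 / 2 * (2 / l) ^ (n + 1)) * (Real.exp (-(l + y) / 2) * ((l * y / 4) ^ (n + 1) * serS (n + 1) (l * y / 4))) := by
    ext y
    have : l * y / 4 = (l / 2) * (y / 2) := by ring
    have e2 : (2 / l) ^ (n + 1) * (l / 2) ^ (n + 1) = 1 := by
      rw [← mul_pow]; field_simp; simp
    unfold pd
    rw [this, mul_pow]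
    linear_combination -(Real.exp (-(l + y) / 2) * (1 / 2) * (y / 2) ^ (n + 1) * serS (n + 1) (l / 2 * (y / 2))) * e2
  rw [e]
  refine HasDerivAt.congr_deriv h3 ?_
  have : l * h / 4 = (l / 2) * (h / 2) := by ring
  have e2 : (2 / l) ^ (n) * (l / 2) ^ (n) = 1 := by
    rw [← mul_pow]; field_simp; simp
  have e3 : (2 / l) * l = 2 := by field_simp
  unfold pd
  simp only [this, mul_pow, pow_succ (2 / l)]
  linear_combination ((1/8) * (2/l) * l * Real.exp (-(l + h) / 2) * (h / 2) ^ (n) * serS n (l / 2 * (h / 2))) * e2 + ((1/8) * Real.exp (-(l + h) / 2) * (h / 2) ^ (n) * serS n (l / 2 * (h / 2))) * e3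

lemma pd_tail (n : ℕ) {l z : ℝ} (hl : 0 < l) (hz : 0 ≤ z) :
    (∫ h in Ioi z, pd (n + 1) l h) - (∫ h in Ioi z, pd n l h) = 2 * pd (n + 1) l z := by
  have i1 := (pd_integrableOn (n + 1) hl.le).mono_set (Ioi_subset_Ioi hz)
  have i0 := (pd_integrableOn n hl.le).mono_set (Ioi_subset_Ioi hz)
  have i2 : IntegrableOn (fun h => 1 / 2 * (pd n l h - pd (n + 1) l h)) (Ioi z) :=
    (i0.sub i1).const_mul _
  have lim := tendsto_zero_of_hasDerivAt_of_integrableOn_Ioi (fun x _ => pd_hasDerivAt n hl x) i2 i1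
  have := integral_Ioi_of_hasDerivAt_of_tendsto' (fun x _ => pd_hasDerivAt n hl x) i2 lim
  rw [integral_const_mul, integral_sub i0 i1] at this
  linarith

lemma besselI_eq (n : ℕ) (x : ℝ) : besselI n x = (x / 2) ^ n * serS n (x ^ 2 / 4) := by
  unfold besselI serS
  rw [← tsum_mul_left]
  congr 1; ext m
  have : x ^ 2 / 4 = (x / 2) ^ 2 := by ring
  rw [this, pow_add, pow_mul]; ring

lemma serS_zero (n : ℕ) : serS n 0 = 1 / (Nat.factorial n : ℝ) := by
  unfold serS
  rw [tsum_eq_single 0]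
  · simp
  · intro m hm; simp [hm]

lemma ncChiSqPdf_eq (n : ℕ) {l h : ℝ} (hl : 0 ≤ l) (hh : 0 < h) :
    ncChiSqPdf (n + 1) l h = pd n l h := by
  unfold ncChiSqPdf pd
  split_ifs with h0
  · subst h0
    simp only [zero_mul, zero_div, serS_zero, zero_add, Nat.add_sub_cancel]
    push_cast
    rw [Real.Gamma_nat_eq_factorial, div_pow, pow_succ]
    field_simp
  · have hl' : 0 < l := lt_of_le_of_ne hl (Ne.symm h0)
    rw [besselI_eq]
    simp only [Nat.add_sub_cancel]
    rw [Real.sq_sqrt (by positivity)]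
    have e1 : (h / l) ^ ((((n + 1 : ℕ) : ℝ) - 1) / 2) = (Real.sqrt (h / l)) ^ n := by
      rw [Real.sqrt_eq_rpow, ← Real.rpow_natCast, ← Real.rpow_mul (by positivity)]
      congr 1; push_cast; ring
    have e2 : Real.sqrt (h / l) ^ n * (Real.sqrt (l * h) / 2) ^ n = (h / 2) ^ n := by
      rw [← mul_pow, ← mul_div_assoc, ← Real.sqrt_mul (by positivity)]
      have : h / l * (l * h) = h ^ 2 := by field_simp
      rw [this, Real.sqrt_sq hh.le]
    rw [e1, ← e2, add_comm h l]; ring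

lemma ncChiSqPdf_neg (n : ℕ) {l h : ℝ} (hl : l < 0) (hh : 0 < h) :
    ncChiSqPdf (n + 2) l h = 0 := by
  unfold ncChiSqPdf
  rw [if_neg hl.ne, besselI_eq, Real.sqrt_eq_zero_of_nonpos (mul_nonpos_of_nonpos_of_nonneg hl.le hh.le)]
  simp

lemma marcumQ_eq (n : ℕ) {a b : ℝ} (ha : 0 < a) (hb : 0 ≤ b) :
    marcumQ (n + 1) a b = ∫ h in Ioi (b ^ 2), pd n (a ^ 2) h := by
  unfold marcumQ
  rw [if_neg ha.ne']
  have him : (fun x : ℝ => x ^ 2) '' Ioi b = Ioi (b ^ 2) := by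
    ext y; simp only [mem_image, mem_Ioi]; constructor
    · rintro ⟨x, hx, rfl⟩; gcongr
    · intro hy
      exact ⟨Real.sqrt y, Real.lt_sqrt_of_sq_lt hy, Real.sq_sqrt ((sq_nonneg b).trans hy.le)⟩
  have hinj : InjOn (fun x : ℝ => x ^ 2) (Ioi b) := by
    intro x hx y hy hxy
    exact (sq_eq_sq₀ (hb.trans (le_of_lt hx)) (hb.trans (le_of_lt hy))).1 hxy
  rw [← him, integral_image_eq_integral_abs_deriv_smul measurableSet_Ioi (f' := fun x => 2 * x)
    (fun x _ => by simpa using (hasDerivAt_pow 2 x).hasDerivWithinAt) hinj]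
  refine setIntegral_congr_fun measurableSet_Ioi fun x hx => ?_
  have hx' : 0 < x := lt_of_le_of_lt hb hx
  simp only [Nat.add_sub_cancel, besselI_eq, pd, smul_eq_mul]
  rw [abs_of_pos (by positivity), mul_pow, add_comm (x ^ 2)]
  have : (x / a) ^ n * (a * x / 2) ^ n = (x ^ 2 / 2) ^ n := by
    rw [← mul_pow]; congr 1; field_simp
  rw [← this]; ring

/-- the cdf -/
noncomputable def cdfF (n : ℕ) (l z : ℝ) : ℝ := ∫ h in (0:ℝ)..z, pd n l h

lemma cdfF_continuous (n : ℕ) : Continuous (Function.uncurry (cdfF n)) := by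
  unfold cdfF
  exact intervalIntegral.continuous_parametric_intervalIntegral_of_continuous
    (f := fun (p : ℝ × ℝ) h => pd n p.1 h) (s := fun p => p.2)
    ((pd_continuous n).comp (by fun_prop : Continuous fun q : (ℝ × ℝ) × ℝ => (q.1.1, q.2))) continuous_snd

lemma cdfF_nonneg (n : ℕ) {l z : ℝ} (hl : 0 ≤ l) (hz : 0 ≤ z) : 0 ≤ cdfF n l z :=
  intervalIntegral.integral_nonneg hz fun h hh => pd_nonneg n hl hh.1

lemma cdfF_eq (n : ℕ) {l z : ℝ} (hl : 0 ≤ l) (hz : 0 ≤ z) :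
    1 - ∫ h in Ioi z, pd n l h = cdfF n l z := by
  have := intervalIntegral.integral_Ioi_sub_Ioi (pd_integrableOn n hl) hz
  rw [pd_integral n hl] at this
  exact this

lemma cdfF_le (n : ℕ) {l z : ℝ} (hl : 0 ≤ l) (hz : 0 ≤ z) : cdfF n l z ≤ 1 := by
  rw [← cdfF_eq n hl hz, sub_le_self_iff]
  exact setIntegral_nonneg measurableSet_Ioi fun h hh => pd_nonneg n hl (hz.trans (le_of_lt hh))

lemma cdfF_pow (n K : ℕ) (hK : 1 ≤ K) (l z : ℝ) :
    ∫ t in (0:ℝ)..z, (K * cdfF n l t ^ (K - 1) * pd n l t) = cdfF n l z ^ K := by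
  have hd : ∀ t, HasDerivAt (cdfF n l) (pd n l t) t := fun t =>
    intervalIntegral.integral_hasDerivAt_right ((pd_continuous' n l).intervalIntegrable _ _)
      ((pd_continuous' n l).stronglyMeasurableAtFilter _ _) (pd_continuous' n l).continuousAt
  have hc : Continuous (cdfF n l) := continuous_iff_continuousAt.2 fun t => (hd t).continuousAt
  have := pd_continuous' n l
  rw [intervalIntegral.integral_eq_sub_of_hasDerivAt (f := fun t => cdfF n l t ^ K) (fun t _ => (hd t).pow K)
    (Continuous.intervalIntegrable (by fun_prop) _ _)]
  have : cdfF n l 0 = 0 := by simp [cdfF]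
  rw [this, zero_pow (by omega), sub_zero]

lemma ncChiSq_Iic (n : ℕ) {l z : ℝ} (hl : 0 ≤ l) (hz : 0 ≤ z) :
    ncChiSq (n + 1) l (Iic z) = ENNReal.ofReal (cdfF n l z) := by
  unfold ncChiSq
  rw [withDensity_apply _ measurableSet_Iic, ← Iic_union_Ioc_eq_Iic hz, lintegral_union measurableSet_Ioc
    (show Disjoint (Iic 0) (Ioc 0 z) from Set.disjoint_left.2 fun x hx hx' => not_lt.2 hx hx'.1)]
  have e1 : ∫⁻ h in Iic (0:ℝ), ENNReal.ofReal (if 0 < h then ncChiSqPdf (n + 1) l h else 0) = 0 := by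
    rw [setLIntegral_congr_fun (g := fun _ => 0) measurableSet_Iic]
    · simp
    · intro h hh; simp [not_lt.2 (show h ≤ 0 from hh)]
  have e2 : ∫⁻ h in Ioc 0 z, ENNReal.ofReal (if 0 < h then ncChiSqPdf (n + 1) l h else 0)
      = ∫⁻ h in Ioc 0 z, ENNReal.ofReal (pd n l h) := by
    refine setLIntegral_congr_fun measurableSet_Ioc fun h hh => ?_
    simp only [if_pos hh.1, ncChiSqPdf_eq n hl hh.1]
  rw [e1, e2, zero_add, cdfF, intervalIntegral.integral_of_le hz, ofReal_integral_eq_lintegral_ofReal]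
  · exact (pd_integrableOn n hl).mono_set Ioc_subset_Ioi_self
  · filter_upwards [ae_restrict_mem measurableSet_Ioc] with h hh
    exact pd_nonneg n hl hh.1.le

lemma ncChiSq_Iic_neg (n : ℕ) {l z : ℝ} (hz : z ≤ 0) :
    ncChiSq n l (Iic z) = 0 := by
  unfold ncChiSq
  rw [withDensity_apply _ measurableSet_Iic, setLIntegral_congr_fun (g := fun _ => 0) measurableSet_Iic]
  · simp
  · intro h hh; simp [not_lt.2 ((show h ≤ z from hh).trans hz)]

lemma ncChiSq_univ_le (n : ℕ) (l : ℝ) : ncChiSq (n + 2) l univ ≤ 1 := by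
  unfold ncChiSq
  rw [withDensity_apply _ MeasurableSet.univ, Measure.restrict_univ]
  have : ∀ h, ENNReal.ofReal (if 0 < h then ncChiSqPdf (n + 2) l h else 0) =
      (Ioi (0:ℝ)).indicator (fun h => ENNReal.ofReal (ncChiSqPdf (n + 2) l h)) h := by
    intro h; by_cases hh : 0 < h <;> simp [hh]
  simp_rw [this]
  rw [lintegral_indicator measurableSet_Ioi]
  rcases le_or_gt 0 l with hl | hl
  · rw [setLIntegral_congr_fun (g := fun h => ENNReal.ofReal (pd (n + 1) l h)) measurableSet_Ioi, pd_lintegral _ hl]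
    intro h hh
    simp only [ncChiSqPdf_eq (n + 1) hl hh]
  · rw [setLIntegral_congr_fun (g := fun h => 0) measurableSet_Ioi]
    · simp
    intro h hh
    simp only [ncChiSqPdf_neg n hl hh, ENNReal.ofReal_zero]

/-- The joint density in real form. -/
noncomputable def jd (n K : ℕ) (c r z : ℝ) : ℝ :=
  gammaPDFReal ((n + 2 : ℕ) : ℝ) (1 / 2) r * (K * cdfF (n + 1) (c * r) z ^ (K - 1) * pd (n + 1) (c * r) z)

lemma jd_measurable (n K : ℕ) (c : ℝ) : Measurable (Function.uncurry (jd n K c)) := by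
  have h1 := (pd_continuous (n + 1)).comp (by fun_prop : Continuous fun q : ℝ × ℝ => (c * q.1, q.2))
  have h2 := (cdfF_continuous (n + 1)).comp (by fun_prop : Continuous fun q : ℝ × ℝ => (c * q.1, q.2))
  have h3 := measurable_gammaPDFReal ((n + 2 : ℕ) : ℝ) (1 / 2)
  exact (h3.comp measurable_fst).mul (((h2.measurable.pow_const (K - 1)).const_mul _).mul h1.measurable)

lemma jd_nonneg (n K : ℕ) {c r z : ℝ} (hc : 0 ≤ c) (hr : 0 ≤ r) (hz : 0 ≤ z) : 0 ≤ jd n K c r z := by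
  have h1 := gammaPDFReal_nonneg (a := ((n + 2 : ℕ) : ℝ)) (r := 1 / 2) (by positivity) (by positivity) r
  have h2 := cdfF_nonneg (n + 1) (l := c * r) (by positivity) hz
  have h3 := pd_nonneg (n + 1) (l := c * r) (by positivity) hz
  unfold jd; positivity

lemma gammaPDFReal_integrable {a r : ℝ} (ha : 0 < a) (hr : 0 < r) : Integrable (gammaPDFReal a r) := by
  refine ⟨(stronglyMeasurable_gammaPDFReal a r).aestronglyMeasurable, ?_⟩
  rw [hasFiniteIntegral_iff_ofReal (Eventually.of_forall (gammaPDFReal_nonneg ha hr))]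
  have := lintegral_gammaPDF_eq_one ha hr
  unfold gammaPDF at this
  rw [this]; simp

lemma jd_integrable (n K : ℕ) {c z : ℝ} (hc : 0 ≤ c) (hz : 0 ≤ z) :
    IntegrableOn (fun r => jd n K c r z) (Ioi 0) := by
  have hg := gammaPDFReal_integrable (a := ((n + 2 : ℕ) : ℝ)) (r := 1 / 2) (by positivity) (by positivity)
  refine Integrable.mono' (hg.integrableOn.mul_const (K * 1 * (1 / 2))) ?_ ?_
  · exact ((jd_measurable n K c).comp (by fun_prop : Measurable fun r : ℝ => (r, z))).aestronglyMeasurable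
  · filter_upwards [ae_restrict_mem measurableSet_Ioi] with r hr
    have hr' : 0 ≤ r := le_of_lt hr
    rw [Real.norm_of_nonneg (jd_nonneg n K hc hr' hz)]
    unfold jd
    have h1 := gammaPDFReal_nonneg (a := ((n + 2 : ℕ) : ℝ)) (r := 1 / 2) (by positivity) (by positivity) r
    have h2 := cdfF_nonneg (n + 1) (l := c * r) (by positivity) hz
    have h2' := pow_le_one₀ (n := K - 1) h2 (cdfF_le (n + 1) (l := c * r) (by positivity) hz)
    have h3 := pd_nonneg (n + 1) (l := c * r) (by positivity) hz
    have h3' := pd_le (n + 1) (l := c * r) (by positivity) hz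
    gcongr

lemma jd_eq (n K : ℕ) {c r z : ℝ} (hc : 0 < c) (hr : 0 < r) (hz : 0 < z) :
    K * (r ^ (n + 2 - 1) * Real.exp (-r / 2) / (2 ^ (n + 2 + 1) * Real.Gamma ((n + 2 : ℕ) : ℝ))
              * (1 - marcumQ (n + 2) (Real.sqrt (c * r)) (Real.sqrt z)) ^ (K - 1)
              * (marcumQ (n + 2) (Real.sqrt (c * r)) (Real.sqrt z)
                  - marcumQ (n + 2 - 1) (Real.sqrt (c * r)) (Real.sqrt z))) = jd n K c r z := by
  have hl : 0 < c * r := by positivity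
  have hs : 0 < Real.sqrt (c * r) := Real.sqrt_pos.2 hl
  rw [show n + 2 - 1 = n + 1 by omega, marcumQ_eq (n + 1) hs (Real.sqrt_nonneg z),
    marcumQ_eq n hs (Real.sqrt_nonneg z), Real.sq_sqrt hl.le, Real.sq_sqrt hz.le, cdfF_eq _ hl.le hz.le,
    pd_tail n hl hz.le, jd, gammaPDFReal, if_pos hr.le, Real.rpow_natCast,
    show ((n + 2 : ℕ) : ℝ) - 1 = ((n + 1 : ℕ) : ℝ) by push_cast; ring, Real.rpow_natCast,
    show -r / 2 = -(1 / 2 * r) by ring, one_div, inv_pow]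
  have hG : Real.Gamma ((n + 2 : ℕ) : ℝ) ≠ 0 := (Real.Gamma_pos_of_pos (by positivity)).ne'
  field_simp
  ring

lemma inner_lintegral (n K : ℕ) (hK : 1 ≤ K) {c r z : ℝ} (hc : 0 < c) (hr : 0 < r) (hz : 0 ≤ z) :
    ∫⁻ t in Ioc 0 z, ENNReal.ofReal (jd n K c r t)
      = gammaPDF ((n + 2 : ℕ) : ℝ) (1 / 2) r * ENNReal.ofReal (cdfF (n + 1) (c * r) z) ^ K := by
  have hl : 0 < c * r := by positivity
  have h1 := gammaPDFReal_nonneg (a := ((n + 2 : ℕ) : ℝ)) (r := 1 / 2) (by positivity) (by positivity) r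
  rw [← ENNReal.ofReal_pow (cdfF_nonneg _ hl.le hz), gammaPDF, ← ENNReal.ofReal_mul h1, ← cdfF_pow _ K hK,
    ← intervalIntegral.integral_const_mul, intervalIntegral.integral_of_le hz, ofReal_integral_eq_lintegral_ofReal]
  · rfl
  · have h2 := (cdfF_continuous (n + 1)).comp (by fun_prop : Continuous fun q : ℝ => (c * r, q))
    have h3 := pd_continuous' (n + 1) (c * r)
    have h2' : Continuous fun q => cdfF (n + 1) (c * r) q := h2
    exact (Continuous.integrableOn_Icc (by fun_prop)).mono_set Ioc_subset_Icc_self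
  · filter_upwards [ae_restrict_mem measurableSet_Ioc] with t ht
    exact jd_nonneg n K hc.le hr.le ht.1.le

theorem stmt6 (N K : ℕ) (hN : 2 ≤ N) (hK : 1 ≤ K) (μ : ℝ) (hμ : μ ∈ Set.Ioo (0 : ℝ) 1)
    (κ : Kernel ℝ (Fin K → ℝ))
    (hκ : ∀ r, κ r = Measure.pi fun _ => ncChiSq N (μ ^ 2 / (1 - μ ^ 2) * r)) :
    Measure.map (fun p : ℝ × (Fin K → ℝ) => ⨆ k, p.2 k) (gammaMeasure N (1 / 2) ⊗ₘ κ)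
      = volume.withDensity (fun z => ENNReal.ofReal (if 0 < z then
          K * ∫ r in Ioi 0,
            r ^ (N - 1) * Real.exp (-r / 2) / (2 ^ (N + 1) * Real.Gamma N)
              * (1 - marcumQ N (Real.sqrt (μ ^ 2 / (1 - μ ^ 2) * r)) (Real.sqrt z)) ^ (K - 1)
              * (marcumQ N (Real.sqrt (μ ^ 2 / (1 - μ ^ 2) * r)) (Real.sqrt z)
                  - marcumQ (N - 1) (Real.sqrt (μ ^ 2 / (1 - μ ^ 2) * r)) (Real.sqrt z))
          else 0)) := by
  obtain ⟨n, rfl⟩ : ∃ n, N = n + 2 := ⟨N - 2, by omega⟩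
  have hc : 0 < μ ^ 2 / (1 - μ ^ 2) := by
    have h1 := hμ.1
    have h2 := hμ.2
    have : 0 < 1 - μ ^ 2 := by nlinarith
    positivity
  set c := μ ^ 2 / (1 - μ ^ 2) with hcdef
  have : Nonempty (Fin K) := ⟨⟨0, hK⟩⟩
  have hfin : ∀ l, IsFiniteMeasure (ncChiSq (n + 2) l) := fun l =>
    ⟨(ncChiSq_univ_le n l).trans_lt ENNReal.one_lt_top⟩
  have : IsFiniteKernel κ := ⟨1, ENNReal.one_lt_top, fun r => by
    rw [hκ, Measure.pi_univ]
    exact Finset.prod_le_one' fun _ _ => ncChiSq_univ_le n _⟩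
  have : IsProbabilityMeasure (gammaMeasure ((n + 2 : ℕ) : ℝ) (1 / 2)) :=
    isProbabilityMeasure_gammaMeasure (by positivity) (by positivity)
  have hmeas : Measurable (fun p : ℝ × (Fin K → ℝ) => ⨆ k, p.2 k) :=
    Measurable.iSup fun k => (measurable_pi_apply k).comp measurable_snd
  -- density rewriting
  have hdens : (fun z => ENNReal.ofReal (if 0 < z then
          K * ∫ r in Ioi 0,
            r ^ (n + 2 - 1) * Real.exp (-r / 2) / (2 ^ (n + 2 + 1) * Real.Gamma (n + 2 : ℕ))
              * (1 - marcumQ (n + 2) (Real.sqrt (c * r)) (Real.sqrt z)) ^ (K - 1)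
              * (marcumQ (n + 2) (Real.sqrt (c * r)) (Real.sqrt z)
                  - marcumQ (n + 2 - 1) (Real.sqrt (c * r)) (Real.sqrt z))
          else 0)) = (Ioi (0:ℝ)).indicator fun z => ∫⁻ r in Ioi 0, ENNReal.ofReal (jd n K c r z) := by
    ext z
    by_cases hz : 0 < z
    · rw [if_pos hz, indicator_of_mem (show z ∈ Ioi (0:ℝ) from hz), ← integral_const_mul,
        setIntegral_congr_fun measurableSet_Ioi (fun r hr => jd_eq n K hc hr hz),
        ofReal_integral_eq_lintegral_ofReal (jd_integrable n K hc.le hz.le)]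
      filter_upwards [ae_restrict_mem measurableSet_Ioi] with r hr
      exact jd_nonneg n K hc.le (le_of_lt hr) hz.le
    · rw [if_neg hz, indicator_of_notMem (show z ∉ Ioi (0:ℝ) from hz), ENNReal.ofReal_zero]
  rw [hdens]
  refine Measure.ext_of_Iic _ _ fun z => ?_
  rw [Measure.map_apply hmeas measurableSet_Iic, Measure.compProd_apply (hmeas measurableSet_Iic),
    withDensity_apply _ measurableSet_Iic, setLIntegral_indicator measurableSet_Ioi, Ioi_inter_Iic]
  have hpre : ∀ r : ℝ, κ r (Prod.mk r ⁻¹' ((fun p : ℝ × (Fin K → ℝ) => ⨆ k, p.2 k) ⁻¹' Iic z))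
      = ncChiSq (n + 2) (c * r) (Iic z) ^ K := by
    intro r
    have : Prod.mk r ⁻¹' ((fun p : ℝ × (Fin K → ℝ) => ⨆ k, p.2 k) ⁻¹' Iic z)
        = Set.pi univ fun _ : Fin K => Iic z := by
      ext y
      simp only [mem_preimage, mem_Iic, Set.mem_pi, mem_univ, forall_const]
      exact ciSup_le_iff (Finite.bddAbove_range _)
    rw [this, hκ, Measure.pi_pi]
    simp
  simp_rw [hpre]
  rcases le_or_gt z 0 with hz | hz
  · rw [Ioc_eq_empty (not_lt.2 hz)]
    simp [ncChiSq_Iic_neg _ hz, show K ≠ 0 by omega]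
  · rw [lintegral_lintegral_swap]
    · have hmk : Measurable fun r : ℝ => ncChiSq (n + 2) (c * r) (Iic z) ^ K := by
        simp_rw [← hpre]
        exact Kernel.measurable_kernel_prodMk_left (hmeas measurableSet_Iic)
      have hmg : Measurable (gammaPDF ((n + 2 : ℕ) : ℝ) (1 / 2)) :=
        (measurable_gammaPDFReal _ _).ennreal_ofReal
      rw [gammaMeasure, lintegral_withDensity_eq_lintegral_mul _ hmg hmk,
        ← lintegral_add_compl _ (measurableSet_Ioi (a := (0:ℝ))), compl_Ioi, setLIntegral_congr Iio_ae_eq_Iic.symm]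
      have : ∫⁻ r in Iio (0:ℝ), (gammaPDF ((n + 2 : ℕ) : ℝ) (1 / 2) * fun r : ℝ => ncChiSq (n + 2) (c * r) (Iic z) ^ K) r = 0 := by
        rw [setLIntegral_congr_fun (g := fun _ => 0) measurableSet_Iio]
        · simp
        · intro r hr
          simp [gammaPDF_of_neg (show r < 0 from hr)]
      rw [this, add_zero]
      refine setLIntegral_congr_fun measurableSet_Ioi fun r hr => ?_
      have hr' : 0 < r := hr
      simp only [Pi.mul_apply]
      rw [inner_lintegral n K hK hc hr' hz.le, ncChiSq_Iic (n + 1) (by positivity) hz.le]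
    · exact ((jd_measurable n K c).comp measurable_swap).ennreal_ofReal.aemeasurable
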